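/- Let L be a first-order language extending the language of rings, and let M be an L-structure whose universe F, equipped with the interpretations of the ring symbols, is a field. Assume Th(M) has finite burden. Then M has uniform finiteness: for every L-formula φ(x; ȳ) with x a single variable, there is n ∈ ℕ such that for every parameter tuple b̄ from F, if the set φ(F; b̄) = {a ∈ F : M ⊨ φ(a; b̄)} has more than n elements, then φ(F; b̄) is infinite. -/

import Mathlib

/- Common model-theoretic definitions. -/

open FirstOrder Set

universe u v w

/-- An inp-pattern of depth `κ` in `nvars` free variables witnessed in the `L`-structure `N`:
formulas `φ α (x̄; ȳ_α)` (with `m α` parameter variables), positive integers `k α`, and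
parameter tuples `b α i` such that each row is `k α`-inconsistent (no tuple of `N` realizes
`φ α (x̄; b α i)` for `k α` distinct values of `i`), while every path is finitely consistent. -/
def IsInpPattern (L : FirstOrder.Language.{u, v}) (N : Type*) [L.Structure N]
    (κ : Type*) (nvars : ℕ) : Prop :=
  ∃ (m : κ → ℕ) (φ : ∀ α : κ, L.Formula (Fin nvars ⊕ Fin (m α)))
    (k : κ → ℕ) (b : ∀ α : κ, ℕ → Fin (m α) → N),
    (∀ α, 1 ≤ k α) ∧
    (∀ α : κ, ¬ ∃ (x : Fin nvars → N) (s : Finset ℕ),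
        k α ≤ s.card ∧ ∀ i ∈ s, (φ α).Realize (Sum.elim x (b α i))) ∧
    (∀ (η : κ → ℕ) (S : Finset κ), ∃ x : Fin nvars → N,
        ∀ α ∈ S, (φ α).Realize (Sum.elim x (b α (η α))))

/-- `Th(M)` has burden at least `n`: some model of `Th(M)` witnesses an inp-pattern of
depth `n` in a single variable. -/
def HasBurdenAtLeast (L : FirstOrder.Language.{u, v}) (M : Type w) [L.Structure M]
    (n : ℕ) : Prop :=
  ∃ N : FirstOrder.Language.Theory.ModelType.{u, v, max u v w} (L.completeTheory M),
    IsInpPattern L N (Fin n) 1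

/-- `Th(M)` has finite burden: for some `n`, no model of `Th(M)` witnesses an inp-pattern of
depth `n + 1` in a single variable. -/
def HasFiniteBurden (L : FirstOrder.Language.{u, v}) (M : Type w) [L.Structure M] : Prop :=
  ∃ n : ℕ, ¬ HasBurdenAtLeast L M (n + 1)

/-- `Th(M)` is strong: no model of `Th(M)` witnesses an inp-pattern of depth `ω` in any
finite tuple of variables. -/
def IsStrong (L : FirstOrder.Language.{u, v}) (M : Type w) [L.Structure M] : Prop :=
  ∀ (N : FirstOrder.Language.Theory.ModelType.{u, v, max u v w} (L.completeTheory M))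
    (nvars : ℕ), ¬ IsInpPattern L N ℕ nvars

/-- A set `D` in a linear order is discrete if each of its points is isolated in it. -/
def DiscreteIn {R : Type*} [LinearOrder R] (D : Set R) : Prop :=
  ∀ x ∈ D, ∃ a b : R, a < x ∧ x < b ∧ Set.Ioo a b ∩ D = {x}

/-- `M` is definably complete: every nonempty definable subset of `R` that is bounded above
has a least upper bound. -/
def DefinablyComplete (L : FirstOrder.Language.{u, v}) (R : Type w)
    [LinearOrder R] [L.Structure R] : Prop :=
  ∀ X : Set R, (Set.univ : Set R).Definable₁ L X → X.Nonempty → BddAbove X →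
    ∃ a : R, IsLUB X a

namespace UnifFin

open FirstOrder.Language

theorem IsInpPattern.of_equiv {L : FirstOrder.Language.{u, v}} {N N' : Type*} [L.Structure N]
    [L.Structure N'] {κ : Type*} {r : ℕ} (e : N ≃[L] N') (h : IsInpPattern L N κ r) :
    IsInpPattern L N' κ r := by
  obtain ⟨m, φ, k, b, h1, h2, h3⟩ := h
  have key : ∀ α (x : Fin r → N) i, (φ α).Realize (Sum.elim (e ∘ x) (e ∘ b α i)) ↔
      (φ α).Realize (Sum.elim x (b α i)) := by
    intro α x i
    rw [← Sum.comp_elim]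
    exact StrongHomClass.realize_formula e (φ α)
  refine ⟨m, φ, k, fun α i => e ∘ b α i, h1, ?_, ?_⟩
  · rintro α ⟨x, s, hs, hx⟩
    refine h2 α ⟨e.symm ∘ x, s, hs, fun i hi => ?_⟩
    rw [← key]
    have : e ∘ e.symm ∘ x = x := by ext; simp
    rw [this]
    exact hx i hi
  · intro η S
    obtain ⟨x, hx⟩ := h3 η S
    exact ⟨e ∘ x, fun α hα => (key α x _).2 (hx α hα)⟩

theorem burden_of_seq {L : FirstOrder.Language.{u, v}} {F : Type w} [Nonempty F] [L.Structure F]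
    {d : ℕ} {β : Type} [Finite β] (ψ : Fin d → L.Formula (Fin 1 ⊕ β))
    (b : Fin d → ℕ → ℕ → β → F)
    (hrow : ∀ α i i', i ≠ i' → ∃ n₀ : ℕ, ∀ n, n₀ ≤ n → ∀ x : F,
      (ψ α).Realize (Sum.elim (fun _ => x) (b α i n)) →
      (ψ α).Realize (Sum.elim (fun _ => x) (b α i' n)) → False)
    (hpath : ∀ (η : Fin d → ℕ) (n : ℕ), ∃ x : F, ∀ α,
      (ψ α).Realize (Sum.elim (fun _ => x) (b α (η α) n))) :
    HasBurdenAtLeast L F d := by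
  classical
  let U : Ultrafilter ℕ := Filter.hyperfilter ℕ
  let P := (U : Filter ℕ).Product (fun _ : ℕ => F)
  have hmod : P ⊨ L.completeTheory F := by
    refine ⟨fun φ hφ => ?_⟩
    rw [Ultraproduct.sentence_realize]
    exact Filter.Eventually.of_forall fun _ => hφ
  let N₀ : Theory.ModelType.{u, v, w} (L.completeTheory F) := Theory.ModelType.of _ P
  let N : Theory.ModelType.{u, v, max u v w} (L.completeTheory F) :=
    Theory.ModelType.ulift.{u, v, w, max u v} N₀
  refine ⟨N, ?_⟩
  have eN : P ≃[L] N := (Equiv.ulift.{max u v, w}.symm : P ≃ _).inducedStructureEquiv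
  refine IsInpPattern.of_equiv eN ?_
  obtain ⟨k, ⟨e⟩⟩ := Finite.exists_equiv_fin β
  let mk : (ℕ → F) → P := fun f => Quotient.mk ((U : Filter ℕ).productSetoid (fun _ : ℕ => F)) f
  have los : ∀ α (f : ℕ → F) i,
      ((ψ α).relabel (Sum.map id e)).Realize
        (Sum.elim (fun _ : Fin 1 => mk f) (fun j => mk fun n => b α i n (e.symm j))) ↔
      ∀ᶠ n in (U : Filter ℕ), (ψ α).Realize (Sum.elim (fun _ => f n) (b α i n)) := by
    intro α f i
    rw [Formula.realize_relabel]
    have h1 : (Sum.elim (fun _ : Fin 1 => mk f) (fun j => mk fun n => b α i n (e.symm j))) ∘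
        Sum.map id e = fun s => mk (fun n => Sum.elim (fun _ => f n) (b α i n) s) := by
      ext s
      rcases s with s | s <;> simp
    rw [h1]
    exact Ultraproduct.realize_formula_cast (u := U) (M := fun _ : ℕ => F) (ψ α)
      (fun s n => Sum.elim (fun _ => f n) (b α i n) s)
  refine ⟨fun _ => k, fun α => (ψ α).relabel (Sum.map id e), fun _ => 2,
    fun α i j => mk fun n => b α i n (e.symm j), fun _ => by norm_num, ?_, ?_⟩
  · rintro α ⟨x, s, hs, hx⟩
    obtain ⟨i, hi, i', hi', hne⟩ := Finset.one_lt_card.1 (show 1 < s.card from hs)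
    obtain ⟨f, hf⟩ : ∃ f, mk f = x 0 := Quotient.exists_rep (x 0)
    have hxf : x = fun _ => mk f := by
      ext j
      rw [Subsingleton.elim j 0, hf]
    have r1 := hx i hi
    have r2 := hx i' hi'
    rw [hxf, los] at r1 r2
    obtain ⟨n₀, hn₀⟩ := hrow α i i' hne
    have r3 : ∀ᶠ n in (U : Filter ℕ), n₀ ≤ n :=
      Filter.Eventually.filter_mono Nat.hyperfilter_le_atTop (Filter.eventually_ge_atTop n₀)
    obtain ⟨n, h1, h2, h3⟩ := (r1.and (r2.and r3)).exists
    exact hn₀ n h3 _ h1 h2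
  · intro η S
    choose f hf using hpath η
    refine ⟨fun _ => mk f, fun α _ => ?_⟩
    rw [los]
    exact Filter.Eventually.of_forall fun n => hf n α

/-- Definability without parameters of a predicate. -/
def DP (L : FirstOrder.Language.{u, v}) {F : Type w} [L.Structure F] {α : Type}
    (P : (α → F) → Prop) : Prop :=
  ∃ θ : L.Formula α, ∀ v, θ.Realize v ↔ P v

section
variable {L : FirstOrder.Language.{u, v}} {F : Type w} [L.Structure F] {α β : Type}

theorem DP.and {P Q : (α → F) → Prop} (hP : DP L P) (hQ : DP L Q) :
    DP L (fun v => P v ∧ Q v) := by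
  obtain ⟨p, hp⟩ := hP
  obtain ⟨q, hq⟩ := hQ
  exact ⟨p ⊓ q, fun v => by rw [Formula.realize_inf, hp, hq]⟩

theorem DP.all [Finite β] {P : β → (α → F) → Prop} (hP : ∀ b, DP L (P b)) :
    DP L (fun v => ∀ b, P b v) := by
  choose p hp using hP
  exact ⟨Formula.iInf p, fun v => by simp [Formula.realize_iInf, hp]⟩

theorem DP.ex [Finite β] {P : (α ⊕ β → F) → Prop} (hP : DP L P) :
    DP L (fun v : α → F => ∃ z : β → F, P (Sum.elim v z)) := by
  obtain ⟨p, hp⟩ := hP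
  exact ⟨p.iExs β, fun v => by simp [Formula.realize_iExs, hp]⟩

theorem DP.relabel {P : (α → F) → Prop} (hP : DP L P) (g : α → β) :
    DP L (fun v : β → F => P (v ∘ g)) := by
  obtain ⟨p, hp⟩ := hP
  exact ⟨p.relabel g, fun v => by rw [Formula.realize_relabel, hp]⟩

theorem DP.eq (i j : α) : DP L (fun v : α → F => v i = v j) :=
  ⟨Term.equal (Term.var i) (Term.var j), fun v => by simp [Formula.realize_equal]⟩

theorem DP.of_definable {S : Set (α → F)} (h : (∅ : Set F).Definable L S) :
    DP L (fun v => v ∈ S) := by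
  obtain ⟨p, hp⟩ := Set.empty_definable_iff.1 h
  exact ⟨p, fun v => by rw [hp]; rfl⟩

end

theorem DP.sum {L : FirstOrder.Language.{u, v}} {F : Type w} [Field F] [L.Structure F]
    (hzero : (∅ : Set F).Definable₁ L {x : F | x = 0})
    (hadd : (∅ : Set F).Definable L {v : Fin 3 → F | v 0 + v 1 = v 2})
    (hmul : (∅ : Set F).Definable L {v : Fin 3 → F | v 0 * v 1 = v 2}) :
    ∀ (d : ℕ) {α : Type} (c x : Fin d → α) (e : α),
      DP L (fun v : α → F => ∑ j, v (c j) * v (x j) = v e) := by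
  intro d
  induction d with
  | zero =>
    intro α c x e
    obtain ⟨p, hp⟩ := (DP.of_definable hzero).relabel (fun _ => e)
    refine ⟨p, fun v => ?_⟩
    rw [hp]
    simp [eq_comm]
  | succ d ih =>
    intro α c x e
    have h1 := ih (α := α ⊕ Fin 2) (fun j => .inl (c j.succ)) (fun j => .inl (x j.succ)) (.inr 0)
    have h2 := (DP.of_definable hmul).relabel (β := α ⊕ Fin 2) ![.inl (c 0), .inl (x 0), .inr 1]
    have h3 := (DP.of_definable hadd).relabel (β := α ⊕ Fin 2) ![.inr 1, .inr 0, .inl e]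
    obtain ⟨p, hp⟩ := ((h1.and h2).and h3).ex
    refine ⟨p, fun v => ?_⟩
    rw [hp]
    simp only [Fin.sum_univ_succ, Set.mem_ofPred_eq, Function.comp_apply, Sum.elim_inl, Sum.elim_inr,
      Matrix.cons_val_zero, Matrix.cons_val_one, Matrix.cons_val]
    constructor
    · rintro ⟨z, ⟨h1, h2⟩, h3⟩
      rw [h1, h2, h3]
    · intro h
      exact ⟨![∑ j : Fin d, v (c j.succ) * v (x j.succ), v (c 0) * v (x 0)], by simpa using h⟩

theorem exists_coeff {F : Type*} [Field F] [Infinite F] {X : Set F} (hX : X.Finite) (d : ℕ) :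
    ∃ c : Fin d → F, ∀ z z' : Fin d → F, (∀ j, z j ∈ X) → (∀ j, z' j ∈ X) →
      ∑ j, c j * z j = ∑ j, c j * z' j → z = z' := by
  classical
  let T : Set (Fin d → F) := Set.univ.pi fun _ => X
  have hT : T.Finite := Set.Finite.pi fun _ => hX
  let q : (Fin d → F) × (Fin d → F) → Polynomial F := fun w =>
    ∑ j : Fin d, Polynomial.C (w.1 j - w.2 j) * Polynomial.X ^ (j : ℕ)
  have hq : ∀ w : (Fin d → F) × (Fin d → F), w.1 ≠ w.2 → q w ≠ 0 := by
    intro w hw h0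
    apply hw
    ext j
    have := congrArg (fun p => Polynomial.coeff p (j : ℕ)) h0
    simp only [q, Polynomial.finsetSum_coeff, Polynomial.coeff_C_mul, Polynomial.coeff_X_pow,
      Polynomial.coeff_zero, Fin.val_inj] at this
    simpa [sub_eq_zero] using this
  let A := hT.toFinset.offDiag
  have hprod : ∏ w ∈ A, q w ≠ 0 := by
    rw [Finset.prod_ne_zero_iff]
    intro w hw
    exact hq w (Finset.mem_offDiag.1 hw).2.2
  obtain ⟨a, ha⟩ : ∃ a, (∏ w ∈ A, q w).eval a ≠ 0 := by
    by_contra! h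
    exact hprod (Polynomial.funext fun r => by simpa using h r)
  rw [Polynomial.eval_prod, Finset.prod_ne_zero_iff] at ha
  refine ⟨fun j => a ^ (j : ℕ), fun z z' hz hz' h => ?_⟩
  by_contra hne
  refine ha (z, z') ?_ ?_
  · rw [Finset.mem_offDiag]
    exact ⟨hT.mem_toFinset.2 fun j _ => hz j, hT.mem_toFinset.2 fun j _ => hz' j, hne⟩
  · simp only [q, Polynomial.eval_finsetSum, Polynomial.eval_mul, Polynomial.eval_C,
      Polynomial.eval_pow, Polynomial.eval_X, sub_mul, Finset.sum_sub_distrib]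
    rw [sub_eq_zero]
    simpa [mul_comm] using h

end UnifFin

/-- If `L` extends the language of rings, `F` is a field which is an
`L`-structure interpreting the ring symbols standardly, and `Th(F)` has finite burden, then
`F` has uniform finiteness: for every formula `φ(x; ȳ)` there is `n` such that for all
parameters `b̄`, if `φ(F; b̄)` has more than `n` elements then it is infinite. -/
theorem statement_1 {L : FirstOrder.Language.{u, v}} {F : Type w} [Field F] [L.Structure F]
    (hzero : (∅ : Set F).Definable₁ L {x : F | x = 0})
    (hone : (∅ : Set F).Definable₁ L {x : F | x = 1})
    (hneg : (∅ : Set F).Definable L {v : Fin 2 → F | v 1 = -v 0})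
    (hadd : (∅ : Set F).Definable L {v : Fin 3 → F | v 0 + v 1 = v 2})
    (hmul : (∅ : Set F).Definable L {v : Fin 3 → F | v 0 * v 1 = v 2})
    (hfb : HasFiniteBurden L F) :
    ∀ (m : ℕ) (φ : L.Formula (Fin 1 ⊕ Fin m)), ∃ n : ℕ, ∀ b : Fin m → F,
      (n : ℕ∞) < {a : F | φ.Realize (Sum.elim (fun _ => a) b)}.encard →
      {a : F | φ.Realize (Sum.elim (fun _ => a) b)}.Infinite := by
  classical
  intro m φ
  by_contra! hcon
  obtain ⟨d', hd⟩ := hfb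
  apply hd
  set d := d' + 1
  choose b hb hfin using hcon
  set X : ℕ → Set F := fun n => {a : F | φ.Realize (Sum.elim (fun _ => a) (b n))} with hXdef
  have hfin' : ∀ n, (X n).Finite := fun n => hfin n
  have hb' : ∀ n : ℕ, (n : ℕ∞) < (X n).encard := hb
  have hFinf : Infinite F := by
    by_contra hF
    rw [not_infinite_iff_finite] at hF
    have h1 := hb' (Nat.card F)
    have h2 : (X (Nat.card F)).encard ≤ (Set.univ : Set F).encard :=
      Set.encard_le_encard (Set.subset_univ _)
    rw [Set.encard_univ, ENat.card_eq_coe_natCard F] at h2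
    exact absurd h1 (not_lt.2 h2)
  choose c hc using fun n => UnifFin.exists_coeff (hfin' n) d
  have hseq : ∀ n, ∃ e : ℕ → F, (∀ i, e i ∈ X n) ∧ ∀ i i', i ≤ n → i' ≤ n → e i = e i' → i = i' := by
    intro n
    have h1 : ((n + 1 : ℕ) : ℕ∞) ≤ (X n).encard := by
      have := Order.add_one_le_of_lt (hb' n)
      simpa using this
    obtain ⟨t, htX, ht⟩ := Set.exists_subset_encard_eq h1
    have htfin : t.Finite := (hfin' n).subset htX
    have hcard : htfin.toFinset.card = n + 1 := by
      rw [htfin.encard_eq_coe_toFinset_card] at ht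
      exact_mod_cast ht
    let g := htfin.toFinset.equivFinOfCardEq hcard
    refine ⟨fun i => (g.symm (Fin.ofNat (n + 1) i) : F), fun i => ?_, fun i i' hi hi' h => ?_⟩
    · exact htX (htfin.mem_toFinset.1 (g.symm (Fin.ofNat (n + 1) i)).2)
    · have h2 := g.symm.injective (Subtype.ext h)
      have h3 := congrArg Fin.val h2
      simpa [Fin.ofNat, Nat.mod_eq_of_lt (Nat.lt_succ_of_le hi),
        Nat.mod_eq_of_lt (Nat.lt_succ_of_le hi')] using h3
  choose e heX heinj using hseq
  have hdef : ∀ α : Fin d, UnifFin.DP L (fun v : Fin 1 ⊕ (Unit ⊕ (Fin d ⊕ Fin m)) → F =>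
      ∃ z : Fin d → F, ((∀ j, φ.Realize (Sum.elim (fun _ => z j) (fun k => v (.inr (.inr (.inr k)))))) ∧
        ∑ j, v (.inr (.inr (.inl j))) * z j = v (.inl 0)) ∧ z α = v (.inr (.inl ()))) := by
    intro α
    have h1 : ∀ j : Fin d, UnifFin.DP L
        (fun v : (Fin 1 ⊕ (Unit ⊕ (Fin d ⊕ Fin m))) ⊕ Fin d → F =>
          φ.Realize (v ∘ Sum.elim (fun _ : Fin 1 => .inr j)
            (fun k : Fin m => .inl (.inr (.inr (.inr k)))))) := fun j =>
      UnifFin.DP.relabel (P := φ.Realize) ⟨φ, fun _ => Iff.rfl⟩ _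
    have h2 := UnifFin.DP.sum hzero hadd hmul d
      (α := (Fin 1 ⊕ (Unit ⊕ (Fin d ⊕ Fin m))) ⊕ Fin d)
      (fun j => .inl (.inr (.inr (.inl j)))) (fun j => .inr j) (.inl (.inl 0))
    have h3 := UnifFin.DP.eq (L := L) (F := F) (α := (Fin 1 ⊕ (Unit ⊕ (Fin d ⊕ Fin m))) ⊕ Fin d)
      (.inr α) (.inl (.inr (.inl ())))
    obtain ⟨p, hp⟩ := (((UnifFin.DP.all h1).and h2).and h3).ex
    refine ⟨p, fun v => ?_⟩
    rw [hp]
    have h4 : ∀ (z : Fin d → F) (j : Fin d), (Sum.elim v z ∘ Sum.elim (fun _ : Fin 1 => Sum.inr j)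
        (fun k : Fin m => Sum.inl (Sum.inr (Sum.inr (Sum.inr k))))) =
        Sum.elim (fun _ => z j) (fun k => v (.inr (.inr (.inr k)))) := by
      intro z j
      ext s
      rcases s with s | s <;> rfl
    simp only [Sum.elim_inl, Sum.elim_inr, h4]
  choose ψ hψ using hdef
  refine UnifFin.burden_of_seq ψ
    (fun _ i n => Sum.elim (fun _ => e n i) (Sum.elim (c n) (b n))) ?_ ?_
  · intro α i i' hne
    refine ⟨max i i', fun n hn x h1 h2 => ?_⟩
    rw [hψ] at h1 h2
    obtain ⟨z, ⟨hz1, hz2⟩, hz3⟩ := h1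
    obtain ⟨z', ⟨hz1', hz2'⟩, hz3'⟩ := h2
    have hzz : z = z' := hc n z z' hz1 hz1' (hz2.trans hz2'.symm)
    apply hne
    apply heinj n i i' (le_trans (le_max_left _ _) hn) (le_trans (le_max_right _ _) hn)
    have h3 : z α = e n i := hz3
    have h4 : z' α = e n i' := hz3'
    rw [← h3, ← h4, hzz]
  · intro η n
    refine ⟨∑ j, c n j * e n (η j), fun α => ?_⟩
    rw [hψ]
    exact ⟨fun j => e n (η j), ⟨fun j => heX n (η j), rfl⟩, rfl⟩
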